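/- Fix an integer p ≥ 2 and a real number α with 0 ≤ α ≤ p−1. Then the Hausdorff dimension of the set B(α) = {x ∈ [0,1] : M̲(x) = M̄(x) = α} equals h(α), where h is the p-adic entropy function. -/

import Mathlib

open Filter MeasureTheory Set
open scoped ENNReal

noncomputable section

/-- Number of words of length `n` over the alphabet `{0, …, p-1}` whose digit sum lies
strictly between `n(α-δ)` and `n(α+δ)`; this is `h(α,n,δ)`. -/
def hcount (p n : ℕ) (α δ : ℝ) : ℕ :=
  Nat.card {w : Fin n → Fin p //
    (n : ℝ) * (α - δ) < ∑ i, ((w i : ℕ) : ℝ) ∧ (∑ i, ((w i : ℕ) : ℝ)) < n * (α + δ)}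

/-- The `p`-adic entropy function
`h(α) = lim_{δ→0} limsup_{n→∞} log h(α,n,δ) / (n log p)`.
Since the inner quantity is nondecreasing in `δ`, the limit as `δ → 0⁺` equals the
infimum over `δ > 0`. -/
def entropy (p : ℕ) (α : ℝ) : ℝ :=
  ⨅ δ : {δ : ℝ // 0 < δ},
    limsup (fun n : ℕ => Real.log (hcount p n α δ) / (n * Real.log p)) atTop

/-- Number of words of length `n` over `{0, …, p-1}` with digit sum `< n(α+δ)`;
this is `h̄(α,n,δ)`. -/
def hbarCount (p n : ℕ) (α δ : ℝ) : ℕ :=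
  Nat.card {w : Fin n → Fin p // (∑ i, ((w i : ℕ) : ℝ)) < n * (α + δ)}

/-- The `p`-adic upper entropy function
`h̄(α) = lim_{δ→0} limsup_{n→∞} log h̄(α,n,δ) / (n log p)`, the limit in `δ`
being the infimum over `δ > 0` by monotonicity in `δ`. -/
def upperEntropy (p : ℕ) (α : ℝ) : ℝ :=
  ⨅ δ : {δ : ℝ // 0 < δ},
    limsup (fun n : ℕ => Real.log (hbarCount p n α δ) / (n * Real.log p)) atTop

/-- Number of words of length `n` over `{0, …, p-1}` with digit sum `> n(α-δ)`;
this is `h̲(α,n,δ)`. -/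
def hlowCount (p n : ℕ) (α δ : ℝ) : ℕ :=
  Nat.card {w : Fin n → Fin p // (n : ℝ) * (α - δ) < ∑ i, ((w i : ℕ) : ℝ)}

/-- The `p`-adic lower entropy function
`h̲(α) = lim_{δ→0} liminf_{n→∞} log h̲(α,n,δ) / (n log p)`, the limit in `δ`
being the infimum over `δ > 0` by monotonicity in `δ`. -/
def lowerEntropy (p : ℕ) (α : ℝ) : ℝ :=
  ⨅ δ : {δ : ℝ // 0 < δ},
    liminf (fun n : ℕ => Real.log (hlowCount p n α δ) / (n * Real.log p)) atTop

/-- The `(n+1)`-th digit `x_{n+1} ∈ {0,…,p-1}` of the non-terminating `p`-adic expansion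
`x = 0.x₁x₂x₃…` of `x ∈ [0,1]` (the expansion not ending in all zeros). -/
def padicDigit (p : ℕ) (x : ℝ) (n : ℕ) : ℤ :=
  (⌈x * p ^ (n + 1)⌉ - 1) - p * (⌈x * p ^ n⌉ - 1)

/-- `S_n(T^m x) = x_{m+1} + ⋯ + x_{m+n}`, the digit sum of length `n` after shifting
`m` times. In particular `msum p x 0 n = S_n(x)`. -/
def msum (p : ℕ) (x : ℝ) (m n : ℕ) : ℤ :=
  ∑ i ∈ Finset.range n, padicDigit p x (m + i)

/-- The `n`-th lower moving digit mean `M̲ₙ(x) = liminf_{m→∞} S_n(T^m x)/n`. -/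
def lowerMn (p : ℕ) (x : ℝ) (n : ℕ) : ℝ :=
  liminf (fun m : ℕ => (msum p x m n : ℝ) / n) atTop

/-- The `n`-th upper moving digit mean `M̄ₙ(x) = limsup_{m→∞} S_n(T^m x)/n`. -/
def upperMn (p : ℕ) (x : ℝ) (n : ℕ) : ℝ :=
  limsup (fun m : ℕ => (msum p x m n : ℝ) / n) atTop

/-- The lower moving digit mean `M̲(x) = lim_{n→∞} M̲ₙ(x)`; the limit exists by
subadditivity, hence equals the `liminf`. -/
def lowerM (p : ℕ) (x : ℝ) : ℝ := liminf (fun n : ℕ => lowerMn p x n) atTop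

/-- The upper moving digit mean `M̄(x) = lim_{n→∞} M̄ₙ(x)`; the limit exists by
subadditivity, hence equals the `limsup`. -/
def upperM (p : ℕ) (x : ℝ) : ℝ := limsup (fun n : ℕ => upperMn p x n) atTop

/-- The lower digit mean `A̲(x) = liminf_{n→∞} S_n(x)/n`. -/
def lowerA (p : ℕ) (x : ℝ) : ℝ := liminf (fun n : ℕ => (msum p x 0 n : ℝ) / n) atTop

/-- The upper digit mean `Ā(x) = limsup_{n→∞} S_n(x)/n`. -/
def upperA (p : ℕ) (x : ℝ) : ℝ := limsup (fun n : ℕ => (msum p x 0 n : ℝ) / n) atTop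

/-- The Banach set `B(α,β) = {x ∈ [0,1] : M̲(x) = α, M̄(x) = β}`. -/
def BanachSet (p : ℕ) (α β : ℝ) : Set ℝ :=
  {x | x ∈ Icc (0 : ℝ) 1 ∧ lowerM p x = α ∧ upperM p x = β}

/-!
Upper bound: for large `n` the first `n` digits of a point of `B(α)` form one of the
`hcount p n α δ` words of digit mean `δ`-close to `α`, so the cylinders of these words, of diameter
at most `p⁻ⁿ`, cover any given point of `B(α)` from some `n` on.

Lower bound: concatenate arbitrary words of length `n` counted by `hcount p n α δ`, preceding each
of them by a block of `K ≈ n δ / min α (p - 1 - α)` equal fillers `0` or `p - 1`, chosen so as to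
keep the discrepancy `∑ (xᵢ - α)` bounded; this puts the resulting number in `B(α)`. Reading each
word as a digit in base `hcount p n α δ` maps the Cantor set of these numbers onto `[0, 1]` by a
Hölder map of exponent `log (hcount p n α δ) / (L log p)`, where `L ≈ n + K` is the block length
and `K / n` is small with `δ`. At the endpoints `α = 0` and `α = p - 1` fillers cannot correct the
discrepancy in both directions, but there the entropy vanishes.
-/

section Limits

variable {R β : Type*} [ConditionallyCompleteLinearOrder R] {f : Filter β} [NeBot f] {u : β → R}
  {a b : R}

theorem liminf_limsup_mem_Icc (h : ∀ᶠ n in f, u n ∈ Icc a b) :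
    liminf u f ∈ Icc a b ∧ limsup u f ∈ Icc a b := by
  have ha : ∀ᶠ n in f, a ≤ u n := h.mono fun _ hn => hn.1
  have hb : ∀ᶠ n in f, u n ≤ b := h.mono fun _ hn => hn.2
  have hge : f.IsBoundedUnder (· ≥ ·) u := isBoundedUnder_of_eventually_ge ha
  have hle : f.IsBoundedUnder (· ≤ ·) u := isBoundedUnder_of_eventually_le hb
  have h₁ : a ≤ liminf u f := le_liminf_of_le hle.isCoboundedUnder_ge ha
  have h₂ : limsup u f ≤ b := limsup_le_of_le hge.isCoboundedUnder_le hb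
  have h₃ : liminf u f ≤ limsup u f := liminf_le_limsup hle hge
  exact ⟨⟨h₁, h₃.trans h₂⟩, h₁.trans h₃, h₂⟩

end Limits

theorem tendsto_of_forall_mem_Icc_div {u : ℕ → ℝ} {α C : ℝ}
    (h : ∀ n : ℕ, 0 < n → u n ∈ Icc (α - C / n) (α + C / n)) : Tendsto u atTop (nhds α) := by
  have hC : Tendsto (fun n : ℕ => C / n) atTop (nhds 0) := tendsto_const_div_atTop_nhds_zero_nat C
  refine tendsto_of_tendsto_of_tendsto_of_le_of_le' (by simpa using tendsto_const_nhds.sub hC)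
    (by simpa using tendsto_const_nhds.add hC) ?_ ?_ <;>
  filter_upwards [eventually_gt_atTop 0] with n hn
  exacts [(h n hn).1, (h n hn).2]

theorem bddAbove_range_sum_of_eventually_block_nonpos {u : ℕ → ℝ} {n : ℕ} (hn : 0 < n)
    (h : ∀ᶠ m in atTop, ∑ i ∈ Finset.range n, u (m + i) ≤ 0) :
    BddAbove (range fun N => ∑ i ∈ Finset.range N, u i) := by
  obtain ⟨m₀, hm₀⟩ := eventually_atTop.1 h
  obtain ⟨C, hC⟩ :=
    ((Finset.range (m₀ + n)).image fun N => ∑ i ∈ Finset.range N, u i).exists_le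
  refine ⟨C, forall_mem_range.2 fun N => ?_⟩
  induction N using Nat.strong_induction_on with
  | _ N ih =>
    rcases lt_or_ge N (m₀ + n) with hN | hN
    · exact hC _ (Finset.mem_image_of_mem _ (Finset.mem_range.2 hN))
    · obtain ⟨k, rfl⟩ := Nat.exists_eq_add_of_le' (show n ≤ N by lia)
      rw [Finset.sum_range_add]
      linarith [ih k (by lia), hm₀ k (by lia)]

theorem eventually_sum_range_lt_of_eventually_block_le {u : ℕ → ℝ} {n : ℕ} (hn : 0 < n) {c c' : ℝ}
    (h : ∀ᶠ m in atTop, ∑ i ∈ Finset.range n, u (m + i) ≤ n * c) (hc : c < c') :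
    ∀ᶠ N : ℕ in atTop, ∑ i ∈ Finset.range N, u i < N * c' := by
  have hsum (m k : ℕ) : ∑ i ∈ Finset.range k, (u (m + i) - c) =
      ∑ i ∈ Finset.range k, u (m + i) - k * c := by
    rw [Finset.sum_sub_distrib, Finset.sum_const, Finset.card_range, nsmul_eq_mul]
  obtain ⟨C, hC⟩ := bddAbove_range_sum_of_eventually_block_nonpos (u := fun i => u i - c) hn
    (h.mono fun m hm => by rw [hsum]; linarith)
  have hlim : Tendsto (fun N : ℕ => (N : ℝ) * (c' - c)) atTop atTop :=
    tendsto_natCast_atTop_atTop.atTop_mul_const (sub_pos.2 hc)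
  filter_upwards [hlim.eventually_gt_atTop C] with N hN
  have hN' : ∑ i ∈ Finset.range N, (u i - c) ≤ C := hC (mem_range_self N)
  have := hsum 0 N
  simp only [zero_add] at this
  linarith

theorem exists_bounded_sum_add {a b : ℝ} {t : ℕ → ℝ} (ha : ∀ q, |t q| ≤ a) (hb : ∀ q, |t q| ≤ b) :
    ∃ s : ℕ → ℝ, (∀ q, s q = -a ∨ s q = b) ∧
      ∀ q, |∑ j ∈ Finset.range q, (t j + s j)| ≤ 2 * max a b := by
  -- Push the running total `D` down when it is nonnegative and up when it is negative.
  let f : ℝ → ℝ := fun D => if 0 ≤ D then -a else b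
  have hf (d : ℝ) : f d = -a ∨ f d = b := by grind
  let D : ℕ → ℝ := fun q => Nat.rec 0 (fun q D => D + (t q + f D)) q
  have hsum (q : ℕ) : ∑ j ∈ Finset.range q, (t j + f (D j)) = D q := by
    induction q with
    | zero => rfl
    | succ q ih => rw [Finset.sum_range_succ, ih]
  refine ⟨fun q => f (D q), fun q => hf (D q), fun q => ?_⟩
  rw [hsum]
  have hmax_a := le_max_left a b
  have hmax_b := le_max_right a b
  induction q with
  | zero => simpa [D] using ((abs_nonneg _).trans (ha 0)).trans hmax_a
  | succ q ih =>
    change |D q + (t q + f (D q))| ≤ _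
    obtain ⟨ha₁, ha₂⟩ := abs_le.1 (ha q)
    obtain ⟨hb₁, hb₂⟩ := abs_le.1 (hb q)
    rw [abs_le] at ih ⊢
    rcases le_or_gt 0 (D q) with h | h
    · have hf : f (D q) = -a := if_pos h
      constructor <;> linarith
    · have hf : f (D q) = b := if_neg h.not_ge
      constructor <;> linarith

section HausdorffDimension

variable {X Y : Type*}

theorem dimH_le_of_eventually_subset_iUnion [EMetricSpace X] {b : ℝ} (hb : 1 < b) {s : NNReal}
    {E : Set X} {ι : ℕ → Type*} [∀ n, Fintype (ι n)] (t : ∀ n, ι n → Set X)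
    (hE : ∀ᶠ n in atTop, E ⊆ ⋃ i, t n i)
    (hdiam : ∀ n i, Metric.ediam (t n i) ≤ ENNReal.ofReal (b ^ n)⁻¹)
    (hcard : ∃ᶠ n in atTop, (Fintype.card (ι n) : ℝ) ≤ (b ^ n) ^ (s : ℝ)) : dimH E ≤ s := by
  borelize X
  have : 0 < b := one_pos.trans hb
  have hradius : Tendsto (fun n : ℕ => ENNReal.ofReal (b ^ n)⁻¹) atTop (nhds 0) := by
    rw [← ENNReal.ofReal_zero]
    exact ENNReal.tendsto_ofReal (tendsto_pow_atTop_atTop_of_one_lt hb).inv_tendsto_atTop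
  have hsum : ∃ᶠ n in atTop, ∑ i, Metric.ediam (t n i) ^ (s : ℝ) ≤ 1 := by
    refine hcard.mono fun n hn => ?_
    have hterm (i : ι n) : Metric.ediam (t n i) ^ (s : ℝ) ≤
        ENNReal.ofReal ((b ^ n) ^ (s : ℝ))⁻¹ := by
      rw [← Real.inv_rpow (by positivity), ← ENNReal.ofReal_rpow_of_pos (by positivity)]
      exact ENNReal.rpow_le_rpow (hdiam n i) s.2
    calc ∑ i, Metric.ediam (t n i) ^ (s : ℝ)
        ≤ Fintype.card (ι n) * ENNReal.ofReal ((b ^ n) ^ (s : ℝ))⁻¹ := by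
          simpa using Finset.sum_le_card_nsmul Finset.univ _ _ fun i _ => hterm i
      _ = ENNReal.ofReal (Fintype.card (ι n) / (b ^ n) ^ (s : ℝ)) := by
          rw [div_eq_mul_inv, ENNReal.ofReal_mul (by positivity), ENNReal.ofReal_natCast]
      _ ≤ 1 := ENNReal.ofReal_le_one.2 (div_le_one_of_le₀ hn (by positivity))
  have hmeas : Measure.hausdorffMeasure (s : ℝ) E ≤ 1 :=
    (Measure.hausdorffMeasure_le_liminf_sum _ _ _ hradius t (Eventually.of_forall hdiam) hE).trans
      (liminf_le_of_frequently_le' hsum)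
  exact dimH_le_of_hausdorffMeasure_ne_top (ne_top_of_le_ne_top ENNReal.one_ne_top hmeas)

theorem dimH_le_of_forall_eventually_mem [EMetricSpace X] {b : ℝ} (hb : 1 < b) {s : NNReal}
    {E : Set X} {ι : ℕ → Type*} [∀ n, Fintype (ι n)] (t : ∀ n, ι n → Set X)
    (hE : ∀ x ∈ E, ∀ᶠ n in atTop, ∃ i, x ∈ t n i)
    (hdiam : ∀ n i, Metric.ediam (t n i) ≤ ENNReal.ofReal (b ^ n)⁻¹)
    (hcard : ∃ᶠ n in atTop, (Fintype.card (ι n) : ℝ) ≤ (b ^ n) ^ (s : ℝ)) : dimH E ≤ s := by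
  have hsub : E ⊆ ⋃ N, {x | ∀ n ≥ N, ∃ i, x ∈ t n i} := fun x hx =>
    mem_iUnion.2 (eventually_atTop.1 (hE x hx))
  refine (dimH_mono hsub).trans ?_
  rw [dimH_iUnion]
  refine iSup_le fun N => dimH_le_of_eventually_subset_iUnion hb t ?_ hdiam hcard
  filter_upwards [eventually_ge_atTop N] with n hn x hx using mem_iUnion.2 (hx n hn)

theorem dimH_range_le_of_edist_le [EMetricSpace X] [EMetricSpace Y] {ι : Type*} {x : ι → X}
    {y : ι → Y} {C r : NNReal} (hr : 0 < r)
    (h : ∀ i j, edist (y i) (y j) ≤ C * edist (x i) (x j) ^ (r : ℝ)) :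
    dimH (range y) ≤ dimH (range x) / r := by
  rcases isEmpty_or_nonempty ι with _ | ⟨⟨i₀⟩⟩
  · simp [range_eq_empty]
  have hfactor : y.FactorsThrough x := fun i j hij => by
    simpa [hij, NNReal.coe_pos.2 hr] using h i j
  let f : X → Y := Function.extend x y fun _ => y i₀
  have hf (i : ι) : f (x i) = y i := hfactor.extend_apply _ i
  have hHolder : HolderOnWith C r f (range x) := by
    rintro _ ⟨i, rfl⟩ _ ⟨j, rfl⟩
    simpa only [hf] using h i j
  have himage : f '' range x = range y := by
    rw [← range_comp]
    exact congrArg range (funext hf)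
  exact himage ▸ hHolder.dimH_image_le hr

theorem one_le_dimH_range_ofDigits {W : Type*} {M : ℕ} (hM : 1 < M) (e : W ≃ Fin M) :
    1 ≤ dimH (range fun ω : ℕ → W => Real.ofDigits fun n => e (ω n)) := by
  have hIcc : Icc (0 : ℝ) 1 ⊆ range fun ω : ℕ → W => Real.ofDigits fun n => e (ω n) := by
    intro t ht
    obtain ⟨a, -, rfl⟩ := Real.ofDigits_SurjOn hM ht
    exact ⟨fun n => e.symm (a n), by simp only [Equiv.apply_symm_apply]⟩
  calc (1 : ℝ≥0∞) = dimH (Icc (0 : ℝ) 1) := by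
        rw [Real.dimH_of_nonempty_interior (by simp)]; simp
    _ ≤ _ := dimH_mono hIcc

theorem one_le_dimH_range_of_mul_inv_pow_le_dist [MetricSpace X] {W : Type*} [Finite W] {b c : ℝ}
    {r : NNReal} (hb : 0 < b) (hr : 0 < r) (hW : 1 < Nat.card W) (hbr : b ^ (r : ℝ) = Nat.card W)
    (hc : 0 < c) (x : (ℕ → W) → X)
    (hx : ∀ ω ω', ω ≠ ω' → c * (b ^ PiNat.firstDiff ω ω')⁻¹ ≤ dist (x ω) (x ω')) :
    1 ≤ dimH (range x) / r := by
  have : (0 : ℝ) < Nat.card W := mod_cast one_pos.trans hW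
  let C : NNReal := ⟨(c ^ (r : ℝ))⁻¹, by positivity⟩
  let e : W ≃ Fin (Nat.card W) := Finite.equivFin W
  -- Reading letters as digits in base `card W` maps `range x` onto the unit interval.
  let y : (ℕ → W) → ℝ := fun ω => Real.ofDigits fun n => e (ω n)
  have hdist (ω ω' : ℕ → W) : dist (y ω) (y ω') ≤ C * dist (x ω) (x ω') ^ (r : ℝ) := by
    rcases eq_or_ne ω ω' with rfl | hne
    · simp [Real.zero_rpow (NNReal.coe_ne_zero.2 hr.ne')]
    set q := PiNat.firstDiff ω ω'
    calc dist (y ω) (y ω') ≤ ((Nat.card W : ℝ) ^ q)⁻¹ :=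
          Real.abs_ofDigits_sub_ofDigits_le fun i hi =>
            congrArg e (PiNat.apply_eq_of_lt_firstDiff hi)
      _ = C * (c * (b ^ q)⁻¹) ^ (r : ℝ) := by
          rw [Real.mul_rpow hc.le (by positivity), Real.inv_rpow (by positivity),
            ← Real.rpow_pow_comm hb.le, hbr]
          exact (inv_mul_cancel_left₀ (by positivity) _).symm
      _ ≤ C * dist (x ω) (x ω') ^ (r : ℝ) := by gcongr; exact hx ω ω' hne
  refine (one_le_dimH_range_ofDigits hW e).trans (dimH_range_le_of_edist_le (C := C) hr ?_)
  intro ω ω'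
  rw [edist_dist, edist_dist, ENNReal.ofReal_rpow_of_nonneg dist_nonneg r.coe_nonneg,
    ← ENNReal.ofReal_coe_nnreal, ← ENNReal.ofReal_mul C.coe_nonneg]
  exact ENNReal.ofReal_le_ofReal (hdist ω ω')

theorem ofReal_logb_card_le_dimH_range [MetricSpace X] {W : Type*} [Finite W] {b c : ℝ}
    (hb : 1 < b) (hc : 0 < c) (x : (ℕ → W) → X)
    (hx : ∀ ω ω', ω ≠ ω' → c * (b ^ PiNat.firstDiff ω ω')⁻¹ ≤ dist (x ω) (x ω')) :
    ENNReal.ofReal (Real.logb b (Nat.card W)) ≤ dimH (range x) := by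
  rcases le_or_gt (Nat.card W) 1 with hW | hW
  · rw [ENNReal.ofReal_of_nonpos]
    · exact bot_le
    · exact Real.logb_nonpos hb (Nat.cast_nonneg _) (mod_cast hW)
  have hb₀ : 0 < b := one_pos.trans hb
  have hlogb : 0 < Real.logb b (Nat.card W) := Real.logb_pos hb (mod_cast hW)
  have hbr : b ^ ((Real.logb b (Nat.card W)).toNNReal : ℝ) = Nat.card W := by
    rw [Real.coe_toNNReal _ hlogb.le, Real.rpow_logb hb₀ hb.ne' (mod_cast one_pos.trans hW)]
  have h := one_le_dimH_range_of_mul_inv_pow_le_dist hb₀ (Real.toNNReal_pos.2 hlogb) hW hbr hc x hx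
  exact (one_mul _).symm.trans_le (ENNReal.mul_le_of_le_div h)

end HausdorffDimension

section Digits

variable {p : ℕ}

theorem padicDigit_mem_Ico (hp : 0 < p) (x : ℝ) (n : ℕ) : padicDigit p x n ∈ Ico (0 : ℤ) p := by
  have hp' : (0 : ℝ) < p := mod_cast hp
  have hlower : (p : ℤ) * (⌈x * p ^ n⌉ - 1) < ⌈x * p ^ (n + 1)⌉ := by
    rw [Int.lt_ceil]
    push_cast
    rw [pow_succ]
    nlinarith [Int.ceil_lt_add_one (x * p ^ n)]
  have hupper : ⌈x * p ^ (n + 1)⌉ ≤ (p : ℤ) * ⌈x * p ^ n⌉ := by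
    rw [Int.ceil_le]
    push_cast
    rw [pow_succ]
    nlinarith [Int.le_ceil (x * p ^ n)]
  unfold padicDigit
  constructor <;> linarith

theorem exists_fin_padicDigit_eq (hp : 0 < p) (x : ℝ) (n : ℕ) :
    ∃ d : Fin p, padicDigit p x n = (d : ℕ) := by
  obtain ⟨h₀, h₁⟩ := padicDigit_mem_Ico hp x n
  lift padicDigit p x n to ℕ using h₀ with d
  exact ⟨⟨d, mod_cast h₁⟩, rfl⟩

theorem msum_div_mem_Icc (hp : 0 < p) (x : ℝ) (m n : ℕ) :
    (msum p x m n : ℝ) / n ∈ Icc (0 : ℝ) p := by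
  have hnonneg : 0 ≤ msum p x m n :=
    Finset.sum_nonneg fun i _ => (padicDigit_mem_Ico hp x (m + i)).1
  have hle : msum p x m n ≤ n * p := by
    simpa [msum] using Finset.sum_le_card_nsmul (Finset.range n) _ (p : ℤ)
      fun i _ => (padicDigit_mem_Ico hp x (m + i)).2.le
  have : (0 : ℝ) ≤ msum p x m n := mod_cast hnonneg
  have hle' : (msum p x m n : ℝ) ≤ n * p := mod_cast hle
  exact ⟨by positivity, div_le_of_le_mul₀ (by positivity) (by positivity) (by linarith)⟩

theorem lowerMn_mem_Icc (hp : 0 < p) (x : ℝ) (n : ℕ) : lowerMn p x n ∈ Icc (0 : ℝ) p :=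
  (liminf_limsup_mem_Icc (Eventually.of_forall fun m => msum_div_mem_Icc hp x m n)).1

theorem upperMn_mem_Icc (hp : 0 < p) (x : ℝ) (n : ℕ) : upperMn p x n ∈ Icc (0 : ℝ) p :=
  (liminf_limsup_mem_Icc (Eventually.of_forall fun m => msum_div_mem_Icc hp x m n)).2

theorem eventually_msum_lt (hp : 0 < p) {x c : ℝ} (hx : upperM p x < c) :
    ∀ᶠ N : ℕ in atTop, (msum p x 0 N : ℝ) < N * c := by
  obtain ⟨c', hc', hc⟩ := exists_between hx
  have hmeans : ∀ᶠ n in atTop, upperMn p x n < c' :=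
    eventually_lt_of_limsup_lt hc' (isBoundedUnder_of ⟨p, fun n => (upperMn_mem_Icc hp x n).2⟩)
  obtain ⟨n, hn, hn₀⟩ := (hmeans.and (eventually_gt_atTop 0)).exists
  have hblocks : ∀ᶠ m in atTop, (msum p x m n : ℝ) / n < c' :=
    eventually_lt_of_limsup_lt hn (isBoundedUnder_of ⟨p, fun m => (msum_div_mem_Icc hp x m n).2⟩)
  have hn' : (0 : ℝ) < n := mod_cast hn₀
  refine (eventually_sum_range_lt_of_eventually_block_le (u := fun i => (padicDigit p x i : ℝ))
    hn₀ (hblocks.mono fun m hm => ?_) hc).mono fun N hN => ?_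
  · rw [div_lt_iff₀' hn', msum, Int.cast_sum] at hm
    exact hm.le
  · simpa only [msum, zero_add, Int.cast_sum] using hN

theorem eventually_lt_msum (hp : 0 < p) {x c : ℝ} (hx : c < lowerM p x) :
    ∀ᶠ N : ℕ in atTop, (N : ℝ) * c < msum p x 0 N := by
  obtain ⟨c', hc, hc'⟩ := exists_between hx
  have hmeans : ∀ᶠ n in atTop, c' < lowerMn p x n :=
    eventually_lt_of_lt_liminf hc' (isBoundedUnder_of ⟨0, fun n => (lowerMn_mem_Icc hp x n).1⟩)
  obtain ⟨n, hn, hn₀⟩ := (hmeans.and (eventually_gt_atTop 0)).exists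
  have hblocks : ∀ᶠ m in atTop, c' < (msum p x m n : ℝ) / n :=
    eventually_lt_of_lt_liminf hn (isBoundedUnder_of ⟨0, fun m => (msum_div_mem_Icc hp x m n).1⟩)
  have hn' : (0 : ℝ) < n := mod_cast hn₀
  refine (eventually_sum_range_lt_of_eventually_block_le (u := fun i => -(padicDigit p x i : ℝ))
    hn₀ (hblocks.mono fun m hm => ?_) (neg_lt_neg hc)).mono fun N hN => ?_
  · rw [lt_div_iff₀' hn', msum, Int.cast_sum] at hm
    rw [Finset.sum_neg_distrib]
    linarith
  · rw [Finset.sum_neg_distrib] at hN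
    simp only [msum, zero_add, Int.cast_sum]
    linarith

theorem lowerM_upperM_eq_of_abs_msum_sub_le {x α C : ℝ}
    (h : ∀ m n, |(msum p x m n : ℝ) - n * α| ≤ C) : lowerM p x = α ∧ upperM p x = α := by
  have hmean (n : ℕ) (hn : 0 < n) (m : ℕ) :
      (msum p x m n : ℝ) / n ∈ Icc (α - C / n) (α + C / n) := by
    have hn' : (0 : ℝ) < n := mod_cast hn
    have habs : |(msum p x m n : ℝ) / n - α| ≤ C / n := by
      rw [div_sub' hn'.ne', abs_div, abs_of_pos hn']
      gcongr
      exact h m n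
    rw [abs_le] at habs
    constructor <;> linarith
  have hmeans (n : ℕ) (hn : 0 < n) :=
    liminf_limsup_mem_Icc (f := atTop) (Eventually.of_forall (hmean n hn))
  exact ⟨(tendsto_of_forall_mem_Icc_div fun n hn => (hmeans n hn).1).liminf_eq,
    (tendsto_of_forall_mem_Icc_div fun n hn => (hmeans n hn).2).limsup_eq⟩

theorem ceil_mul_pow_eq_of_padicDigit_eq {x y : ℝ} (hceil : ⌈x⌉ = ⌈y⌉) {N : ℕ}
    (h : ∀ i < N, padicDigit p x i = padicDigit p y i) : ⌈x * p ^ N⌉ = ⌈y * p ^ N⌉ := by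
  induction N with
  | zero => simpa using hceil
  | succ N ih =>
    have hprefix := ih fun i hi => h i (by lia)
    have hdigit := h N (by lia)
    rw [padicDigit, padicDigit, hprefix] at hdigit
    linarith

theorem abs_sub_le_of_padicDigit_eq (hp : 0 < p) {x y : ℝ} (hceil : ⌈x⌉ = ⌈y⌉) {N : ℕ}
    (h : ∀ i < N, padicDigit p x i = padicDigit p y i) : |x - y| ≤ ((p : ℝ) ^ N)⁻¹ := by
  have hpN : (0 : ℝ) < (p : ℝ) ^ N := by positivity
  have hx := Int.ceil_eq_iff.1 (ceil_mul_pow_eq_of_padicDigit_eq hceil h)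
  have hy := Int.ceil_eq_iff.1 (Eq.refl ⌈y * p ^ N⌉)
  rw [← one_div, le_div_iff₀ hpN, ← abs_of_pos hpN, ← abs_mul, abs_le]
  constructor <;> linarith [hx.1, hx.2, hy.1, hy.2]

/-- The points of `(0, 1]` whose non-terminating `p`-adic expansion starts with the word `w`. -/
def digitCylinder {N : ℕ} (w : Fin N → Fin p) : Set ℝ :=
  {x ∈ Ioc (0 : ℝ) 1 | ∀ i : Fin N, padicDigit p x i = (w i : ℕ)}

theorem ediam_digitCylinder_le {N : ℕ} (hp : 0 < p) (w : Fin N → Fin p) :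
    Metric.ediam (digitCylinder w) ≤ ENNReal.ofReal ((p : ℝ) ^ N)⁻¹ := by
  have hceil {x : ℝ} (hx : x ∈ digitCylinder w) : ⌈x⌉ = 1 :=
    Int.ceil_eq_iff.2 ⟨by simpa using hx.1.1, by simpa using hx.1.2⟩
  refine Metric.ediam_le fun x hx y hy => ?_
  rw [edist_dist]
  refine ENNReal.ofReal_le_ofReal
    (abs_sub_le_of_padicDigit_eq hp ((hceil hx).trans (hceil hy).symm) fun i hi => ?_)
  exact (hx.2 ⟨i, hi⟩).trans (hy.2 ⟨i, hi⟩).symm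

end Digits

section OfDigits

variable {p : ℕ} {a b : ℕ → Fin p}

theorem mul_ofDigits (a : ℕ → Fin p) :
    (p : ℝ) * Real.ofDigits a = (a 0 : ℕ) + Real.ofDigits fun i => a (i + 1) := by
  have hp : (p : ℝ) ≠ 0 := mod_cast (Fin.pos (a 0)).ne'
  have h := Real.ofDigits_eq_sum_add_ofDigits a 1
  rw [Finset.sum_range_one, Real.ofDigitsTerm] at h
  rw [h]
  field_simp
  ring

theorem ofDigits_pos {j : ℕ} (hj : (a j : ℕ) ≠ 0) : 0 < Real.ofDigits a := by
  have : (0 : ℝ) < p := mod_cast Fin.pos (a 0)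
  have : (0 : ℝ) < (a j : ℕ) := mod_cast Nat.pos_of_ne_zero hj
  refine Real.summable_ofDigitsTerm.tsum_pos (fun _ => Real.ofDigitsTerm_nonneg) j ?_
  rw [Real.ofDigitsTerm]
  positivity

theorem padicDigit_succ (p : ℕ) (x : ℝ) (n : ℕ) :
    padicDigit p x (n + 1) = padicDigit p (p * x) n := by
  have h (k : ℕ) : x * p ^ (k + 1) = p * x * p ^ k := by ring
  rw [padicDigit, padicDigit, h, h]

theorem padicDigit_natCast_add (p k : ℕ) (x : ℝ) (n : ℕ) :
    padicDigit p (k + x) n = padicDigit p x n := by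
  have h (m : ℕ) : (k + x) * p ^ m = x * p ^ m + (k * p ^ m : ℤ) := by push_cast; ring
  rw [padicDigit, padicDigit, h, h, Int.ceil_add_intCast, Int.ceil_add_intCast]
  ring

theorem padicDigit_ofDigits (ha : ∃ᶠ j in atTop, (a j : ℕ) ≠ 0) (n : ℕ) :
    padicDigit p (Real.ofDigits a) n = (a n : ℕ) := by
  have hceil {c : ℕ → Fin p} (hc : ∃ᶠ j in atTop, (c j : ℕ) ≠ 0) : ⌈Real.ofDigits c⌉ = 1 := by
    obtain ⟨j, hj⟩ := hc.exists
    exact Int.ceil_eq_iff.2 ⟨by simpa using ofDigits_pos hj, by simpa using Real.ofDigits_le_one c⟩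
  have hshift {c : ℕ → Fin p} (hc : ∃ᶠ j in atTop, (c j : ℕ) ≠ 0) :
      ∃ᶠ j in atTop, (c (j + 1) : ℕ) ≠ 0 := by
    rw [← map_add_atTop_eq_nat 1] at hc
    exact frequently_map.1 hc
  induction n generalizing a with
  | zero =>
    rw [padicDigit, zero_add, pow_one, pow_zero, mul_one, hceil ha, mul_comm, mul_ofDigits,
      Int.ceil_natCast_add, hceil (hshift ha)]
    ring
  | succ n ih => rw [padicDigit_succ, mul_ofDigits, padicDigit_natCast_add, ih (hshift ha)]

theorem mul_abs_ofDigits_sub (a b : ℕ → Fin p) :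
    p * |Real.ofDigits a - Real.ofDigits b| =
      |(((a 0 : ℕ) : ℝ) - (b 0 : ℕ)) +
        (Real.ofDigits (fun i => a (i + 1)) - Real.ofDigits fun i => b (i + 1))| := by
  rw [← add_sub_add_comm, ← mul_ofDigits, ← mul_ofDigits, ← mul_sub, abs_mul, Nat.abs_cast]

theorem natCast_fin_mem_Icc (d : Fin p) : ((d : ℕ) : ℝ) ∈ Icc (0 : ℝ) (p - 1) :=
  ⟨Nat.cast_nonneg _, le_sub_iff_add_le.2 (mod_cast d.2)⟩

theorem abs_fin_sub_le (d : Fin p) {x : ℝ} (hx : x ∈ Icc (0 : ℝ) (p - 1)) :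
    |((d : ℕ) : ℝ) - x| ≤ p - 1 :=
  abs_sub_le_of_nonneg_of_le (natCast_fin_mem_Icc d).1 (natCast_fin_mem_Icc d).2 hx.1 hx.2

theorem abs_ofDigits_sub_le_of_apply_eq {k : ℕ} (h : a k = b k) :
    |Real.ofDigits a - Real.ofDigits b| ≤ 1 - (p - 1) / (p : ℝ) ^ (k + 1) := by
  have hp : (0 : ℝ) < p := mod_cast Fin.pos (a 0)
  induction k generalizing a b with
  | zero =>
    refine le_of_mul_le_mul_left ?_ hp
    calc p * |Real.ofDigits a - Real.ofDigits b|
        = |Real.ofDigits (fun i => a (i + 1)) - Real.ofDigits fun i => b (i + 1)| := by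
          rw [mul_abs_ofDigits_sub, h, sub_self, zero_add]
      _ ≤ 1 := by simpa using Real.abs_ofDigits_sub_ofDigits_le (n := 0) (by simp)
      _ = p * (1 - (p - 1) / (p : ℝ) ^ (0 + 1)) := by field_simp; ring
  | succ k ih =>
    refine le_of_mul_le_mul_left ?_ hp
    calc p * |Real.ofDigits a - Real.ofDigits b|
        ≤ (p - 1) + (1 - (p - 1) / (p : ℝ) ^ (k + 1)) := by
          rw [mul_abs_ofDigits_sub]
          refine (abs_add_le _ _).trans (add_le_add ?_ (ih h))
          exact abs_fin_sub_le _ (natCast_fin_mem_Icc _)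
      _ = p * (1 - (p - 1) / (p : ℝ) ^ (k + 1 + 1)) := by
          rw [pow_succ _ (k + 1)]
          field_simp
          ring

theorem inv_pow_le_abs_ofDigits_sub_of_apply_zero_ne (hp : 1 < p) {k : ℕ} (h₀ : a 0 ≠ b 0)
    (hk : a (k + 1) = b (k + 1)) :
    ((p : ℝ) ^ (k + 2))⁻¹ ≤ |Real.ofDigits a - Real.ofDigits b| := by
  have hp₀ : (0 : ℝ) < p := mod_cast one_pos.trans hp
  have hp₂ : (2 : ℝ) ≤ p := mod_cast hp
  have hdigits : 1 ≤ |((a 0 : ℕ) : ℝ) - (b 0 : ℕ)| := by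
    have hne : ((a 0 : ℕ) : ℤ) - (b 0 : ℕ) ≠ 0 :=
      sub_ne_zero.2 fun h => h₀ (Fin.ext (mod_cast h))
    exact_mod_cast Int.one_le_abs hne
  have htails := abs_ofDigits_sub_le_of_apply_eq (a := fun i => a (i + 1))
    (b := fun i => b (i + 1)) hk
  refine le_of_mul_le_mul_left ?_ hp₀
  calc p * ((p : ℝ) ^ (k + 2))⁻¹ = 1 / (p : ℝ) ^ (k + 1) := by rw [pow_succ]; field_simp
    _ ≤ (p - 1) / (p : ℝ) ^ (k + 1) := by gcongr; linarith
    _ ≤ p * |Real.ofDigits a - Real.ofDigits b| := by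
        rw [mul_abs_ofDigits_sub]
        linarith [abs_sub_abs_le_abs_add (((a 0 : ℕ) : ℝ) - (b 0 : ℕ))
          (Real.ofDigits (fun i => a (i + 1)) - Real.ofDigits fun i => b (i + 1))]

theorem inv_pow_le_abs_ofDigits_sub (hp : 1 < p) {i j : ℕ} (hij : i < j) (hi : a i ≠ b i)
    (hj : a j = b j) : ((p : ℝ) ^ (j + 1))⁻¹ ≤ |Real.ofDigits a - Real.ofDigits b| := by
  have hp₀ : (0 : ℝ) < p := mod_cast one_pos.trans hp
  induction j generalizing i a b with
  | zero => exact absurd hij i.not_lt_zero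
  | succ k ih =>
    by_cases h₀ : a 0 = b 0
    · obtain ⟨i, rfl⟩ := Nat.exists_eq_succ_of_ne_zero fun h : i = 0 => hi (h ▸ h₀)
      refine le_of_mul_le_mul_left ?_ hp₀
      calc p * ((p : ℝ) ^ (k + 1 + 1))⁻¹ = ((p : ℝ) ^ (k + 1))⁻¹ := by
            rw [pow_succ _ (k + 1)]; field_simp
        _ ≤ |Real.ofDigits (fun i => a (i + 1)) - Real.ofDigits fun i => b (i + 1)| :=
            ih (Nat.lt_of_succ_lt_succ hij) hi hj
        _ = p * |Real.ofDigits a - Real.ofDigits b| := by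
            rw [mul_abs_ofDigits_sub, h₀, sub_self, zero_add]
    · exact inv_pow_le_abs_ofDigits_sub_of_apply_zero_ne hp h₀ hj

theorem frequently_ne_zero_of_abs_sum_sub_le {u : ℕ → ℝ} {α C : ℝ} (hα : 0 < α)
    (h : ∀ m, |∑ i ∈ Finset.range m, (u i - α)| ≤ C) : ∃ᶠ i in atTop, u i ≠ 0 := by
  intro hzero
  obtain ⟨m, hm⟩ := eventually_atTop.1 hzero
  have hsum (n : ℕ) : ∑ i ∈ Finset.range (m + n), (u i - α) =
      ∑ i ∈ Finset.range m, (u i - α) - n * α := by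
    have hu (i : ℕ) : u (m + i) = 0 := not_not.1 (hm _ le_self_add)
    simp only [Finset.sum_range_add, hu, Finset.sum_const, Finset.card_range, nsmul_eq_mul]
    ring
  obtain ⟨n, hn⟩ := exists_nat_gt (2 * C / α)
  rw [div_lt_iff₀ hα] at hn
  have hmn := abs_le.1 (h (m + n))
  rw [hsum] at hmn
  linarith [(abs_le.1 (h m)).2]

theorem ofDigits_mem_BanachSet {α C : ℝ} (hα : 0 < α)
    (h : ∀ m, |∑ i ∈ Finset.range m, (((a i : ℕ) : ℝ) - α)| ≤ C) :
    Real.ofDigits a ∈ BanachSet p α α := by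
  have ha : ∃ᶠ i in atTop, (a i : ℕ) ≠ 0 :=
    (frequently_ne_zero_of_abs_sum_sub_le hα h).mono fun i hi => by exact_mod_cast hi
  refine ⟨⟨Real.ofDigits_nonneg a, Real.ofDigits_le_one a⟩,
    lowerM_upperM_eq_of_abs_msum_sub_le (C := 2 * C) fun m n => ?_⟩
  have hblock : (msum p (Real.ofDigits a) m n : ℝ) - n * α =
      ∑ i ∈ Finset.range (m + n), (((a i : ℕ) : ℝ) - α) -
        ∑ i ∈ Finset.range m, (((a i : ℕ) : ℝ) - α) := by
    rw [Finset.sum_range_add]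
    simp [msum, padicDigit_ofDigits ha]
  rw [hblock]
  exact (abs_sub _ _).trans (by linarith [h (m + n), h m])

end OfDigits
section Entropy

/-- The words of length `n` over `{0, …, p - 1}` whose digit mean is `δ`-close to `α`, that is, the
words counted by `hcount p n α δ`. -/
def wordsNearMean (p n : ℕ) (α δ : ℝ) : Set (Fin n → Fin p) :=
  {w | n * (α - δ) < ∑ i, ((w i : ℕ) : ℝ) ∧ ∑ i, ((w i : ℕ) : ℝ) < n * (α + δ)}

/-- The exponential growth rate of `hcount p n α δ` in base `p`, whose infimum over `δ > 0` is
`entropy p α`. -/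
def entropyRate (p : ℕ) (α δ : ℝ) : ℝ :=
  limsup (fun n : ℕ => Real.log (hcount p n α δ) / (n * Real.log p)) atTop

variable {p : ℕ} {α δ : ℝ}

theorem natCard_wordsNearMean (p n : ℕ) (α δ : ℝ) :
    Nat.card (wordsNearMean p n α δ) = hcount p n α δ := rfl

theorem hcount_le_pow (p n : ℕ) (α δ : ℝ) : hcount p n α δ ≤ p ^ n := by
  refine (Nat.card_le_card_of_injective _ Subtype.val_injective).trans_eq ?_
  simp

theorem log_hcount_div_mem_Icc (p n : ℕ) (α δ : ℝ) :
    Real.log (hcount p n α δ) / (n * Real.log p) ∈ Icc (0 : ℝ) 1 := by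
  have := Real.log_natCast_nonneg p
  refine ⟨div_nonneg (Real.log_natCast_nonneg _) (by positivity),
    div_le_one_of_le₀ ?_ (by positivity)⟩
  rcases Nat.eq_zero_or_pos (hcount p n α δ) with h | h
  · rw [h, Nat.cast_zero, Real.log_zero]
    positivity
  · rw [← Real.log_pow]
    exact Real.log_le_log (mod_cast h) (mod_cast hcount_le_pow p n α δ)

theorem entropyRate_nonneg (p : ℕ) (α δ : ℝ) : 0 ≤ entropyRate p α δ :=
  (liminf_limsup_mem_Icc (Eventually.of_forall fun n => log_hcount_div_mem_Icc p n α δ)).2.1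

theorem entropy_nonneg (p : ℕ) (α : ℝ) : 0 ≤ entropy p α :=
  Real.iInf_nonneg fun δ => entropyRate_nonneg p α δ

theorem entropy_le_entropyRate (p : ℕ) (α : ℝ) (hδ : 0 < δ) : entropy p α ≤ entropyRate p α δ :=
  ciInf_le (f := fun δ : {δ : ℝ // 0 < δ} => entropyRate p α δ)
    ⟨0, forall_mem_range.2 fun δ => entropyRate_nonneg p α δ⟩ ⟨δ, hδ⟩

theorem entropyRate_le (hp : 1 < p) {A B : ℝ}
    (h : ∀ n : ℕ, Real.log (hcount p n α δ) ≤ (A * n + B) * Real.log p) :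
    entropyRate p α δ ≤ A := by
  have hlogp : 0 < Real.log p := Real.log_pos (mod_cast hp)
  have hlim : Tendsto (fun n : ℕ => A + B / n) atTop (nhds A) := by
    simpa using tendsto_const_nhds.add (tendsto_const_div_atTop_nhds_zero_nat B)
  refine le_of_le_of_eq (limsup_le_limsup ?_ ?_ hlim.isBoundedUnder_le) hlim.limsup_eq
  · filter_upwards [eventually_gt_atTop 0] with n hn
    have : (0 : ℝ) < n := mod_cast hn
    calc Real.log (hcount p n α δ) / (n * Real.log p)
        ≤ (A * n + B) * Real.log p / (n * Real.log p) := by gcongr; exact h n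
      _ = A + B / n := by field_simp
  · exact (isBoundedUnder_of
      ⟨0, fun n => (log_hcount_div_mem_Icc p n α δ).1⟩).isCoboundedUnder_le

theorem eventually_hcount_le_rpow_of_entropyRate_lt (hp : 1 < p) {s : ℝ}
    (hs : entropyRate p α δ < s) : ∀ᶠ n : ℕ in atTop, (hcount p n α δ : ℝ) ≤ ((p : ℝ) ^ n) ^ s := by
  have : (0 : ℝ) < p := mod_cast one_pos.trans hp
  have hlogp : 0 < Real.log p := Real.log_pos (mod_cast hp)
  have hrate : ∀ᶠ n : ℕ in atTop, Real.log (hcount p n α δ) / (n * Real.log p) < s :=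
    eventually_lt_of_limsup_lt hs
      (isBoundedUnder_of ⟨1, fun n => (log_hcount_div_mem_Icc p n α δ).2⟩)
  filter_upwards [hrate, eventually_gt_atTop 0] with n hn hn₀
  have : (0 : ℝ) < n := mod_cast hn₀
  rw [div_lt_iff₀ (by positivity)] at hn
  refine Real.le_rpow_of_log_le (by positivity) ?_
  rw [Real.log_pow]
  exact hn.le

theorem sum_fin_pow_le {y : ℝ} (hy : y ∈ Ioo (0 : ℝ) 1) (p : ℕ) :
    ∑ d : Fin p, y ^ (d : ℕ) ≤ (1 - y)⁻¹ := by
  rw [Fin.sum_univ_eq_sum_range]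
  exact sum_le_hasSum _ (fun i _ => pow_nonneg hy.1.le i) (hasSum_geometric_of_lt_one hy.1.le hy.2)

/-- Chernoff bound: every word counted by `hcount` has weight `y ^ Σ wᵢ ≥ y ^ (n (α + δ))`, while
the weights of all words of length `n` add up to at most `(1 - y)⁻ⁿ`. -/
theorem hcount_mul_rpow_le {y : ℝ} (hy : y ∈ Ioo (0 : ℝ) 1) (p n : ℕ) (α δ : ℝ) :
    hcount p n α δ * y ^ (n * (α + δ)) ≤ ((1 - y)⁻¹) ^ n := by
  classical
  have hy₀ : 0 < y := hy.1
  calc (hcount p n α δ : ℝ) * y ^ (n * (α + δ))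
      = ∑ _w ∈ (wordsNearMean p n α δ).toFinset, y ^ (n * (α + δ)) := by
        rw [Finset.sum_const, nsmul_eq_mul, toFinset_card, ← Nat.card_eq_fintype_card,
          natCard_wordsNearMean]
    _ ≤ ∑ w ∈ (wordsNearMean p n α δ).toFinset, ∏ i, y ^ (w i : ℕ) := by
        refine Finset.sum_le_sum fun w hw => ?_
        rw [Finset.prod_pow_eq_pow_sum, ← Real.rpow_natCast, Nat.cast_sum]
        exact Real.rpow_le_rpow_of_exponent_ge hy₀ hy.2.le (mem_toFinset.1 hw).2.le
    _ ≤ ∑ w : Fin n → Fin p, ∏ i, y ^ (w i : ℕ) :=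
        Finset.sum_le_univ_sum_of_nonneg fun _ => by positivity
    _ = (∑ d : Fin p, y ^ (d : ℕ)) ^ n := (Fintype.sum_pow (fun d : Fin p => y ^ (d : ℕ)) n).symm
    _ ≤ ((1 - y)⁻¹) ^ n := by
        gcongr
        exact sum_fin_pow_le hy p

theorem entropyRate_mul_log_le (hp : 1 < p) (h : 0 ≤ α + δ) {y : ℝ} (hy : y ∈ Ioo (0 : ℝ) 1) :
    entropyRate p α δ * Real.log p ≤ -(α + δ) * Real.log y - Real.log (1 - y) := by
  have hlogp : 0 < Real.log p := Real.log_pos (mod_cast hp)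
  have hy₀ : 0 < y := hy.1
  rw [← le_div_iff₀ hlogp]
  refine entropyRate_le hp (B := 0) fun n => ?_
  rcases Nat.eq_zero_or_pos (hcount p n α δ) with h₀ | h₀
  · have hlogy : Real.log y ≤ 0 := Real.log_nonpos hy.1.le hy.2.le
    have hlogy' : Real.log (1 - y) ≤ 0 :=
      Real.log_nonpos (by linarith [hy.2]) (by linarith [hy.1])
    have : 0 ≤ -(α + δ) * Real.log y - Real.log (1 - y) := by nlinarith
    rw [h₀, Nat.cast_zero, Real.log_zero]
    positivity
  · have h₀' : (0 : ℝ) < hcount p n α δ := mod_cast h₀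
    have hlog := Real.log_le_log (by positivity) (hcount_mul_rpow_le hy p n α δ)
    rw [Real.log_mul h₀'.ne' (by positivity), Real.log_rpow hy.1, Real.log_pow,
      Real.log_inv] at hlog
    calc Real.log (hcount p n α δ) ≤ (-(α + δ) * Real.log y - Real.log (1 - y)) * n := by linarith
      _ = _ := by field_simp; ring

theorem entropy_zero (hp : 1 < p) : entropy p 0 = 0 := by
  have hlogp : 0 < Real.log p := Real.log_pos (mod_cast hp)
  have hbound : ∀ᶠ δ : ℝ in nhdsWithin 0 (Ioi 0),
      entropy p 0 * Real.log p ≤ -(δ * Real.log δ) - Real.log (1 - δ) := by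
    filter_upwards [Ioo_mem_nhdsGT one_pos] with δ hδ
    calc entropy p 0 * Real.log p ≤ entropyRate p 0 δ * Real.log p := by
          gcongr; exact entropy_le_entropyRate p 0 hδ.1
      _ ≤ -(0 + δ) * Real.log δ - Real.log (1 - δ) :=
          entropyRate_mul_log_le hp (by linarith [hδ.1]) hδ
      _ = -(δ * Real.log δ) - Real.log (1 - δ) := by ring
  have hlim : Tendsto (fun δ : ℝ => -(δ * Real.log δ) - Real.log (1 - δ)) (nhdsWithin 0 (Ioi 0))
      (nhds 0) := by
    have hcont : ContinuousAt (fun δ : ℝ => -(δ * Real.log δ) - Real.log (1 - δ)) 0 :=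
      Real.continuous_mul_log.continuousAt.neg.sub
        ((continuousAt_const.sub continuousAt_id).log (by simp))
    simpa using hcont.tendsto.mono_left nhdsWithin_le_nhds
  refine le_antisymm ?_ (entropy_nonneg p 0)
  exact nonpos_of_mul_nonpos_left (ge_of_tendsto hlim hbound) hlogp

theorem hcount_sub_one_sub (p n : ℕ) (α δ : ℝ) :
    hcount p n (p - 1 - α) δ = hcount p n α δ := by
  refine Nat.card_congr (Equiv.subtypeEquiv (Equiv.arrowCongr (Equiv.refl _) Fin.revPerm) ?_)
  intro w
  have hrev : ∑ i, ((Fin.rev (w i) : ℕ) : ℝ) = n * (p - 1) - ∑ i, ((w i : ℕ) : ℝ) := by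
    have h (d : Fin p) : ((Fin.rev d : ℕ) : ℝ) = p - 1 - (d : ℕ) := by
      rw [Fin.val_rev, Nat.cast_sub d.2, Nat.cast_succ]
      ring
    simp only [h, Finset.sum_sub_distrib, Finset.sum_const, Finset.card_univ, Fintype.card_fin,
      nsmul_eq_mul]
    ring
  simp only [Equiv.arrowCongr_apply, Equiv.coe_refl, Equiv.refl_symm, Function.comp_apply, id_eq,
    Fin.revPerm_apply, hrev]
  constructor <;> rintro ⟨h₁, h₂⟩ <;> constructor <;> linarith

theorem entropy_sub_one_sub (p : ℕ) (α : ℝ) : entropy p (p - 1 - α) = entropy p α := by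
  simp only [entropy, hcount_sub_one_sub]

theorem entropy_sub_one (hp : 1 < p) : entropy p (p - 1) = 0 := by
  rw [← sub_zero ((p : ℝ) - 1), entropy_sub_one_sub, entropy_zero hp]

end Entropy

section UpperBound

variable {p : ℕ} {α δ : ℝ}

theorem eventually_exists_mem_digitCylinder (hp : 0 < p) (hδ : 0 < δ) {x : ℝ}
    (hx : x ∈ BanachSet p α α) (hx₀ : 0 < x) :
    ∀ᶠ n in atTop, ∃ w : wordsNearMean p n α δ, x ∈ digitCylinder w.1 := by
  obtain ⟨hxI, hlower, hupper⟩ := hx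
  filter_upwards [eventually_lt_msum hp (c := α - δ) (by linarith),
    eventually_msum_lt hp (c := α + δ) (by linarith)] with n hn₁ hn₂
  choose a ha using exists_fin_padicDigit_eq hp x
  have hsum : (msum p x 0 n : ℝ) = ∑ i : Fin n, ((a i : ℕ) : ℝ) := by
    simp only [msum, zero_add, ha, Int.cast_sum, Int.cast_natCast]
    exact Finset.sum_range fun i => ((a i : ℕ) : ℝ)
  rw [hsum] at hn₁ hn₂
  exact ⟨⟨fun i => a i, hn₁, hn₂⟩, ⟨hx₀, hxI.2⟩, fun i => ha i⟩

theorem dimH_BanachSet_diag_le_of_entropyRate_lt (hp : 1 < p) (hδ : 0 < δ) {s : NNReal}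
    (hs : entropyRate p α δ < s) : dimH (BanachSet p α α) ≤ s := by
  have hp₀ : 0 < p := one_pos.trans hp
  have hsubset : BanachSet p α α ⊆ {0} ∪ BanachSet p α α ∩ Ioi 0 := fun x hx =>
    hx.1.1.eq_or_lt.imp Eq.symm fun hx₀ => ⟨hx, hx₀⟩
  refine (dimH_mono hsubset).trans ?_
  rw [dimH_union, dimH_singleton, max_eq_right zero_le]
  classical
  refine dimH_le_of_forall_eventually_mem (b := p) (mod_cast hp)
    (fun n (w : wordsNearMean p n α δ) => digitCylinder w.1)
    (fun x hx => eventually_exists_mem_digitCylinder hp₀ hδ hx.1 hx.2)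
    (fun n w => ediam_digitCylinder_le hp₀ w.1)
    ((eventually_hcount_le_rpow_of_entropyRate_lt hp hs).frequently.mono fun n hn => ?_)
  rwa [← Nat.card_eq_fintype_card, natCard_wordsNearMean]

theorem toReal_dimH_BanachSet_diag_le_entropy (hp : 1 < p) (α : ℝ) :
    (dimH (BanachSet p α α)).toReal ≤ entropy p α := by
  have : Nonempty {δ : ℝ // 0 < δ} := ⟨⟨1, one_pos⟩⟩
  refine le_ciInf fun δ => le_of_forall_gt_imp_ge_of_dense fun s hs => ?_
  lift s to NNReal using ((entropyRate_nonneg p α δ).trans hs.le)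
  exact ENNReal.toReal_le_coe_of_le_coe (dimH_BanachSet_diag_le_of_entropyRate_lt hp δ.2 hs)

end UpperBound

section ConcatBlocks

variable {A : Type*} {L : ℕ} [NeZero L]

/-- The sequence obtained by writing the words `B 0, B 1, B 2, …`, all of length `L`, one after the
other. -/
def concatBlocks (B : ℕ → Fin L → A) (m : ℕ) : A :=
  Function.uncurry B (Nat.divModEquiv L m)

theorem concatBlocks_mul_add (B : ℕ → Fin L → A) (q : ℕ) (i : Fin L) :
    concatBlocks B (q * L + i) = B q i :=
  congrArg (Function.uncurry B) ((Nat.divModEquiv L).apply_symm_apply (q, i))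

theorem sum_range_mul_concatBlocks {M : Type*} [AddCommMonoid M] (f : A → M) (B : ℕ → Fin L → A)
    (q : ℕ) :
    ∑ m ∈ Finset.range (q * L), f (concatBlocks B m) = ∑ j ∈ Finset.range q, ∑ i, f (B j i) := by
  induction q with
  | zero => simp
  | succ q ih =>
    rw [add_one_mul, Finset.sum_range_add, ih, Finset.sum_range_succ]
    congr 1
    rw [Finset.sum_range]
    simp only [concatBlocks_mul_add]

theorem abs_sum_range_concatBlocks_le {f : A → ℝ} {P C : ℝ} (hf : ∀ x, |f x| ≤ P)
    {B : ℕ → Fin L → A} (hB : ∀ q, |∑ j ∈ Finset.range q, ∑ i, f (B j i)| ≤ C) (m : ℕ) :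
    |∑ i ∈ Finset.range m, f (concatBlocks B i)| ≤ C + L * P := by
  have hP : 0 ≤ P := (abs_nonneg _).trans (hf (B 0 0))
  rw [← Nat.div_add_mod' m L, Finset.sum_range_add, sum_range_mul_concatBlocks]
  refine (abs_add_le _ _).trans (add_le_add (hB _) ?_)
  calc |∑ i ∈ Finset.range (m % L), f (concatBlocks B (m / L * L + i))|
      ≤ ∑ i ∈ Finset.range (m % L), |f (concatBlocks B (m / L * L + i))| :=
        Finset.abs_sum_le_sum_abs _ _
    _ ≤ (m % L : ℕ) * P := by
        simpa using Finset.sum_le_card_nsmul (Finset.range (m % L)) _ P fun _ _ => hf _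
    _ ≤ L * P := by
        gcongr
        exact (Nat.mod_lt m (NeZero.pos L)).le

theorem inv_pow_le_abs_ofDigits_concatBlocks_sub {p : ℕ} (hp : 1 < p) {B B' : ℕ → Fin L → Fin p}
    {q : ℕ} {i j : Fin L} (hij : i < j) (hi : B q i ≠ B' q i) (hj : B q j = B' q j) :
    (((p : ℝ) ^ L) ^ (q + 1))⁻¹ ≤
      |Real.ofDigits (concatBlocks B) - Real.ofDigits (concatBlocks B')| := by
  have hp₁ : (1 : ℝ) ≤ p := mod_cast hp.le
  calc (((p : ℝ) ^ L) ^ (q + 1))⁻¹ ≤ ((p : ℝ) ^ (q * L + j + 1))⁻¹ := by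
        rw [← pow_mul]
        gcongr
        rw [mul_add_one, mul_comm L q, add_assoc]
        gcongr
        exact j.2
    _ ≤ |Real.ofDigits (concatBlocks B) - Real.ofDigits (concatBlocks B')| := by
        refine inv_pow_le_abs_ofDigits_sub hp (i := q * L + i) (by simpa using hij) ?_ ?_ <;>
          simpa only [concatBlocks_mul_add]

end ConcatBlocks

section PaddedWord

variable {A : Type*} {K n : ℕ}

/-- The word `c ⋯ c w z`: the word `w` preceded by `K` copies of the filler letter `c` and followed
by the guard letter `z`. -/
def paddedWord (K : ℕ) (c : A) (w : Fin n → A) (z : A) : Fin (K + (n + 1)) → A :=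
  Fin.append (fun _ : Fin K => c) (Fin.snoc w z)

theorem paddedWord_natAdd_castSucc (c : A) (w : Fin n → A) (z : A) (i : Fin n) :
    paddedWord K c w z (Fin.natAdd K i.castSucc) = w i := by
  simp [paddedWord]

theorem paddedWord_natAdd_last (c : A) (w : Fin n → A) (z : A) :
    paddedWord K c w z (Fin.natAdd K (Fin.last n)) = z := by
  rw [paddedWord, Fin.append_right, Fin.snoc_last]

theorem sum_paddedWord {M : Type*} [AddCommMonoid M] (f : A → M) (c : A) (w : Fin n → A) (z : A) :
    ∑ i, f (paddedWord K c w z i) = K • f c + (∑ i, f (w i) + f z) := by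
  simp [paddedWord, Fin.sum_univ_add, Fin.sum_univ_castSucc]

variable {p : ℕ}

/-- The number with `p`-adic expansion `0.c₀⋯c₀w₀z c₁⋯c₁w₁z c₂⋯c₂w₂z …`, where each filler digit
`c q` is repeated `K` times. -/
def ofPaddedWords (K : ℕ) (c : ℕ → Fin p) (w : ℕ → Fin n → Fin p) (z : Fin p) : ℝ :=
  Real.ofDigits (concatBlocks fun q => paddedWord K (c q) (w q) z)

-- The common guard digit `z` rules out pairs of close numbers such as `0.1000…` and `0.0999…`.
theorem inv_pow_le_abs_ofPaddedWords_sub (hp : 1 < p) {c c' : ℕ → Fin p}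
    {w w' : ℕ → Fin n → Fin p} (z : Fin p) {q : ℕ} (hq : w q ≠ w' q) :
    (((p : ℝ) ^ (K + (n + 1))) ^ (q + 1))⁻¹ ≤
      |ofPaddedWords K c w z - ofPaddedWords K c' w' z| := by
  obtain ⟨i, hi⟩ := Function.ne_iff.1 hq
  refine inv_pow_le_abs_ofDigits_concatBlocks_sub hp (q := q) (i := Fin.natAdd K i.castSucc)
    (j := Fin.natAdd K (Fin.last n)) ((Fin.strictMono_natAdd K) i.castSucc_lt_last) ?_ ?_
  · rwa [paddedWord_natAdd_castSucc, paddedWord_natAdd_castSucc]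
  · rw [paddedWord_natAdd_last, paddedWord_natAdd_last]

variable {α κ δ : ℝ}

theorem exists_fin_mul_sub_eq (hp : 0 < p) {s : ℝ}
    (hs : s = -(K * α) ∨ s = K * (p - 1 - α)) : ∃ c : Fin p, s = K * (((c : ℕ) : ℝ) - α) := by
  rcases hs with rfl | rfl
  · exact ⟨⟨0, hp⟩, by simp⟩
  · exact ⟨⟨p - 1, Nat.sub_one_lt_of_lt hp⟩, by simp [Nat.cast_sub (Nat.one_le_of_lt hp)]⟩

theorem abs_sum_wordsNearMean_sub_add_le (hα : α ∈ Icc (0 : ℝ) (p - 1))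
    (w : wordsNearMean p n α δ) (z : Fin p) :
    |∑ i, (((w.1 i : ℕ) : ℝ) - α) + (((z : ℕ) : ℝ) - α)| ≤ n * δ + p := by
  have hword : |∑ i, (((w.1 i : ℕ) : ℝ) - α)| ≤ n * δ := by
    rw [Finset.sum_sub_distrib, Finset.sum_const, Finset.card_univ, Fintype.card_fin,
      nsmul_eq_mul, abs_le]
    constructor <;> linarith [w.2.1, w.2.2]
  linarith [abs_add_le (∑ i, (((w.1 i : ℕ) : ℝ) - α)) (((z : ℕ) : ℝ) - α), abs_fin_sub_le z hα]

theorem exists_ofPaddedWords_mem_BanachSet (hκ : 0 < κ) (hα : κ ≤ α) (hα' : κ ≤ p - 1 - α)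
    (hK : n * δ + p ≤ K * κ) (w : ℕ → wordsNearMean p n α δ) (z : Fin p) :
    ∃ c : ℕ → Fin p, ofPaddedWords K c (fun q => (w q).1) z ∈ BanachSet p α α := by
  have hαI : α ∈ Icc (0 : ℝ) (p - 1) := ⟨by linarith, by linarith⟩
  have hblock (q : ℕ) :
      |∑ i, ((((w q).1 i : ℕ) : ℝ) - α) + (((z : ℕ) : ℝ) - α)| ≤ K * κ :=
    (abs_sum_wordsNearMean_sub_add_le hαI (w q) z).trans hK
  obtain ⟨s, hs, hsum⟩ := exists_bounded_sum_add
    (fun q => (hblock q).trans (by gcongr : (K : ℝ) * κ ≤ K * α))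
    (fun q => (hblock q).trans (by gcongr : (K : ℝ) * κ ≤ K * (p - 1 - α)))
  choose c hc using fun q => exists_fin_mul_sub_eq (Fin.pos z) (hs q)
  have hpadded (q : ℕ) :
      ∑ i, ((((paddedWord K (c q) (w q).1 z i : Fin p) : ℕ) : ℝ) - α) =
        ∑ i, ((((w q).1 i : ℕ) : ℝ) - α) + (((z : ℕ) : ℝ) - α) + s q := by
    rw [sum_paddedWord (fun d : Fin p => ((d : ℕ) : ℝ) - α), hc, nsmul_eq_mul, add_comm]
  simp only [← hpadded] at hsum
  exact ⟨c, ofDigits_mem_BanachSet (hκ.trans_le hα)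
    (abs_sum_range_concatBlocks_le (f := fun d : Fin p => ((d : ℕ) : ℝ) - α)
      (fun d => abs_fin_sub_le d hαI) hsum)⟩

end PaddedWord

section LowerBound

variable {p : ℕ} {α κ δ : ℝ}

theorem log_hcount_le (hp : 1 < p) (hκ : 0 < κ) (hα : κ ≤ α) (hα' : κ ≤ p - 1 - α) {K n : ℕ}
    (hK : n * δ + p ≤ K * κ) :
    Real.log (hcount p n α δ) ≤
      (dimH (BanachSet p α α)).toReal * (K + (n + 1)) * Real.log p := by
  have hp₁ : (1 : ℝ) < p := mod_cast hp
  let z : Fin p := ⟨0, one_pos.trans hp⟩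
  choose c hc using fun w : ℕ → wordsNearMean p n α δ =>
    exists_ofPaddedWords_mem_BanachSet hκ hα hα' hK w z
  have hdim := ofReal_logb_card_le_dimH_range
    (one_lt_pow₀ hp₁ (by lia : K + (n + 1) ≠ 0)) (c := ((p : ℝ) ^ (K + (n + 1)))⁻¹)
    (by positivity)
    (fun w : ℕ → wordsNearMean p n α δ => ofPaddedWords K (c w) (fun q => (w q).1) z)
    fun w w' hw => by
      rw [← mul_inv, ← pow_succ']
      exact inv_pow_le_abs_ofPaddedWords_sub hp z
        (Subtype.coe_ne_coe.2 (PiNat.apply_firstDiff_ne hw))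
  have hle := (ENNReal.ofReal_le_iff_le_toReal (Real.dimH_ne_top _)).1
    (hdim.trans (dimH_mono (range_subset_iff.2 hc)))
  have hlogp : 0 < Real.log p := Real.log_pos hp₁
  rw [natCard_wordsNearMean, ← Real.log_div_log, Real.log_pow, div_le_iff₀ (by positivity)] at hle
  push_cast at hle
  linarith

theorem entropyRate_le_toReal_dimH_mul (hp : 1 < p) (hκ : 0 < κ) (hα : κ ≤ α)
    (hα' : κ ≤ p - 1 - α) (hδ : 0 ≤ δ) :
    entropyRate p α δ ≤ (dimH (BanachSet p α α)).toReal * (1 + δ / κ) := by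
  set d := (dimH (BanachSet p α α)).toReal
  refine entropyRate_le hp (B := d * (p / κ + 2)) fun n => ?_
  set K := ⌈(n * δ + p) / κ⌉₊
  have hK : n * δ + p ≤ K * κ := (div_le_iff₀ hκ).1 (Nat.le_ceil _)
  have hK' : (K : ℝ) ≤ (n * δ + p) / κ + 1 := (Nat.ceil_lt_add_one (by positivity)).le
  calc Real.log (hcount p n α δ) ≤ d * (K + (n + 1)) * Real.log p := log_hcount_le hp hκ hα hα' hK
    _ ≤ d * ((n * δ + p) / κ + 1 + (n + 1)) * Real.log p := by gcongr
    _ = (d * (1 + δ / κ) * n + d * (p / κ + 2)) * Real.log p := by ring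

theorem entropy_le_toReal_dimH_BanachSet_diag (hp : 1 < p) (hα : 0 ≤ α) (hα' : α ≤ p - 1) :
    entropy p α ≤ (dimH (BanachSet p α α)).toReal := by
  rcases hα.eq_or_lt with rfl | hα
  · rw [entropy_zero hp]
    exact ENNReal.toReal_nonneg
  rcases hα'.eq_or_lt with rfl | hα'
  · rw [entropy_sub_one hp]
    exact ENNReal.toReal_nonneg
  set d := (dimH (BanachSet p α α)).toReal
  set κ := min α (p - 1 - α)
  have hκ : 0 < κ := lt_min hα (sub_pos.2 hα')
  have hlim : Tendsto (fun δ => d * (1 + δ / κ)) (nhdsWithin 0 (Ioi 0)) (nhds d) := by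
    have hcont : Continuous fun δ => d * (1 + δ / κ) := by fun_prop
    simpa using (hcont.tendsto 0).mono_left nhdsWithin_le_nhds
  refine ge_of_tendsto hlim (eventually_mem_nhdsWithin.mono fun δ hδ => ?_)
  exact (entropy_le_entropyRate p α hδ).trans <|
    entropyRate_le_toReal_dimH_mul hp hκ (min_le_left _ _) (min_le_right _ _) (le_of_lt hδ)

end LowerBound

/-- For an integer `p ≥ 2` and a real `0 ≤ α ≤ p-1`, the Hausdorff
dimension of `B(α) = B(α,α) = {x ∈ [0,1] : M̲(x) = M̄(x) = α}` equals `h(α)`. -/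
theorem dimH_BanachSet_diag (p : ℕ) (hp : 2 ≤ p) (α : ℝ)
    (hα : 0 ≤ α) (hα' : α ≤ (p : ℝ) - 1) :
    dimH (BanachSet p α α) = ENNReal.ofReal (entropy p α) := by
  rw [← (toReal_dimH_BanachSet_diag_le_entropy hp α).antisymm
    (entropy_le_toReal_dimH_BanachSet_diag hp hα hα'), ENNReal.ofReal_toReal (Real.dimH_ne_top _)]
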